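/- arXiv:2006.05585 — 2 statements merged into one kernel-verified Lean document; each statement's English description precedes it below -/
import Mathlib

section
/- Let h, l > 0 and let R = [0,h] × [0,l] ⊂ ℝ². For every function v : ℝ² → ℝ that is continuously differentiable on a neighborhood of R, the trace of v² on the bottom edge satisfies ∫₀ʰ v(x,0)² dx ≤ (1/l)·‖v‖²_{L²(R)} + 2·‖v‖_{L²(R)}·‖∇v‖_{L²(R)}. -/
open MeasureTheory

open Set

/-!
On each vertical segment the function `(y - b) / (b - a) * w y ^ 2` vanishes at `b` and equals
`-w a ^ 2` at `a`, so the fundamental theorem of calculus writes `w a ^ 2` as an integral over the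
segment. As the weight is bounded by one in absolute value, this gives
`w a ^ 2 ≤ ∫ (w ^ 2 / (b - a) + 2 |w| |w'|)`; integrating over the edge and applying the
Cauchy–Schwarz inequality on the strip gives the trace inequality.
-/

section Interval

variable {a b : ℝ} {w w' : ℝ → ℝ}

lemma sq_left_eq_integral (hab : a < b) (hw : ContinuousOn w (Icc a b))
    (hderiv : ∀ y ∈ Ioo a b, HasDerivAt w (w' y) y) (hw' : IntervalIntegrable w' volume a b) :
    w a ^ 2 = ∫ y in a..b, (w y ^ 2 / (b - a) + 2 * ((y - b) / (b - a)) * w y * w' y) := by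
  have hweighted : ContinuousOn (fun y ↦ (y - b) / (b - a) * w y ^ 2) (Icc a b) := by fun_prop
  have hproduct (y : ℝ) (hy : y ∈ Ioo a b) :
      HasDerivAt (fun y ↦ (y - b) / (b - a) * w y ^ 2)
        (w y ^ 2 / (b - a) + 2 * ((y - b) / (b - a)) * w y * w' y) y := by
    refine ((((hasDerivAt_id y).sub_const b).div_const (b - a)).mul
      ((hderiv y hy).pow 2)).congr_deriv ?_
    simp only [id, Pi.pow_apply, Nat.cast_ofNat, Nat.add_one_sub_one, pow_one]
    ring
  have hsq : IntervalIntegrable (fun y ↦ w y ^ 2 / (b - a)) volume a b :=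
    ((hw.pow 2).div_const _).intervalIntegrable_of_Icc hab.le
  have hmul : IntervalIntegrable (fun y ↦ 2 * ((y - b) / (b - a)) * w y * w' y) volume a b :=
    hw'.continuousOn_mul (by rw [uIcc_of_le hab.le]; fun_prop)
  rw [intervalIntegral.integral_eq_sub_of_hasDerivAt_of_le hab.le hweighted hproduct
    (hsq.add hmul)]
  have hne : b - a ≠ 0 := (sub_pos.2 hab).ne'
  field_simp
  ring

lemma sq_left_le_integral (hab : a < b) (hw : ContinuousOn w (Icc a b))
    (hderiv : ∀ y ∈ Ioo a b, HasDerivAt w (w' y) y) (hw' : IntervalIntegrable w' volume a b) :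
    w a ^ 2 ≤ ∫ y in a..b, (w y ^ 2 / (b - a) + 2 * (|w y| * |w' y|)) := by
  have hsq : IntervalIntegrable (fun y ↦ w y ^ 2 / (b - a)) volume a b :=
    ((hw.pow 2).div_const _).intervalIntegrable_of_Icc hab.le
  have hmul : IntervalIntegrable (fun y ↦ 2 * ((y - b) / (b - a)) * w y * w' y) volume a b :=
    hw'.continuousOn_mul (by rw [uIcc_of_le hab.le]; fun_prop)
  have habs : IntervalIntegrable (fun y ↦ 2 * (|w y| * |w' y|)) volume a b :=
    (hw'.abs.continuousOn_mul (uIcc_of_le hab.le ▸ hw.abs)).const_mul 2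
  rw [sq_left_eq_integral hab hw hderiv hw']
  refine intervalIntegral.integral_mono_on hab.le (hsq.add hmul) (hsq.add habs) fun y hy ↦
    add_le_add_right ?_ _
  have hweight : |(y - b) / (b - a)| ≤ 1 := by
    rw [abs_div, abs_of_pos (sub_pos.2 hab), div_le_one (sub_pos.2 hab), abs_le]
    constructor <;> linarith [hy.1, hy.2]
  calc 2 * ((y - b) / (b - a)) * w y * w' y
      ≤ |2 * ((y - b) / (b - a)) * w y * w' y| := le_abs_self _
    _ = 2 * |(y - b) / (b - a)| * |w y| * |w' y| := by simp only [abs_mul, abs_two]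
    _ ≤ 2 * 1 * |w y| * |w' y| := by gcongr
    _ = 2 * (|w y| * |w' y|) := by ring

end Interval

lemma integral_abs_mul_abs_le_sqrt_mul_sqrt {α : Type*} [MeasurableSpace α] {μ : Measure α}
    {f g : α → ℝ} (hf : MemLp f 2 μ) (hg : MemLp g 2 μ) :
    ∫ x, |f x| * |g x| ∂μ ≤ √(∫ x, f x ^ 2 ∂μ) * √(∫ x, g x ^ 2 ∂μ) := by
  rw [← ENNReal.ofReal_ofNat] at hf hg
  simpa [Real.sqrt_eq_rpow] using
    integral_mul_norm_le_Lp_mul_Lq Real.HolderConjugate.two_two hf hg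

section Strip

variable {X : Type*} [MeasurableSpace X] {μ : Measure X} [SFinite μ] {a b : ℝ}

lemma ae_intervalIntegrable_slice_of_memLp_two {f : X × ℝ → ℝ} (hab : a ≤ b)
    (hf : MemLp f 2 (μ.prod (volume.restrict (Icc a b)))) :
    ∀ᵐ x ∂μ, IntervalIntegrable (fun y ↦ f (x, y)) volume a b := by
  filter_upwards [hf.1.prodMk_left, hf.integrable_sq.prod_right_ae] with x hmeas hsq
  rw [intervalIntegrable_iff_integrableOn_Icc_of_le hab]
  exact ((memLp_two_iff_integrable_sq hmeas).2 hsq).integrable one_le_two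

theorem integral_sq_trace_le_of_memLp_two {v v' : X × ℝ → ℝ} (hab : a < b)
    (hcont : ∀ᵐ x ∂μ, ContinuousOn (fun y ↦ v (x, y)) (Icc a b))
    (hderiv : ∀ᵐ x ∂μ, ∀ y ∈ Ioo a b, HasDerivAt (fun y ↦ v (x, y)) (v' (x, y)) y)
    (hv : MemLp v 2 (μ.prod (volume.restrict (Icc a b))))
    (hv' : MemLp v' 2 (μ.prod (volume.restrict (Icc a b)))) :
    ∫ x, v (x, a) ^ 2 ∂μ ≤
      1 / (b - a) * (∫ p, v p ^ 2 ∂μ.prod (volume.restrict (Icc a b))) +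
        2 * √(∫ p, v p ^ 2 ∂μ.prod (volume.restrict (Icc a b))) *
          √(∫ p, v' p ^ 2 ∂μ.prod (volume.restrict (Icc a b))) := by
  set ν := μ.prod (volume.restrict (Icc a b))
  have hsq : Integrable (fun p ↦ v p ^ 2 / (b - a)) ν := hv.integrable_sq.div_const _
  have habs : Integrable (fun p ↦ 2 * (|v p| * |v' p|)) ν :=
    (hv.abs.integrable_mul hv'.abs).const_mul 2
  have hslice : ∀ᵐ x ∂μ,
      v (x, a) ^ 2 ≤ ∫ y in Icc a b, (v (x, y) ^ 2 / (b - a) + 2 * (|v (x, y)| * |v' (x, y)|)) := by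
    filter_upwards [hcont, hderiv, ae_intervalIntegrable_slice_of_memLp_two hab.le hv']
      with x hcont_slice hderiv_slice hintegrable
    rw [integral_Icc_eq_integral_Ioc, ← intervalIntegral.integral_of_le hab.le]
    exact sq_left_le_integral hab hcont_slice hderiv_slice hintegrable
  calc ∫ x, v (x, a) ^ 2 ∂μ
      ≤ ∫ x, (∫ y in Icc a b, (v (x, y) ^ 2 / (b - a) + 2 * (|v (x, y)| * |v' (x, y)|))) ∂μ :=
        integral_mono_of_nonneg (.of_forall fun _ ↦ sq_nonneg _)
          (hsq.add habs).integral_prod_left hslice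
    _ = ∫ p, (v p ^ 2 / (b - a) + 2 * (|v p| * |v' p|)) ∂ν :=
        (integral_prod _ (hsq.add habs)).symm
    _ = 1 / (b - a) * (∫ p, v p ^ 2 ∂ν) + 2 * ∫ p, |v p| * |v' p| ∂ν := by
        rw [integral_add hsq habs, integral_div, integral_const_mul, div_eq_inv_mul, one_div]
    _ ≤ 1 / (b - a) * (∫ p, v p ^ 2 ∂ν) + 2 * √(∫ p, v p ^ 2 ∂ν) * √(∫ p, v' p ^ 2 ∂ν) := by
        rw [mul_assoc 2]
        gcongr
        exact integral_abs_mul_abs_le_sqrt_mul_sqrt hv hv'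

end Strip

lemma memLp_restrict_of_continuousOn_of_isCompact {X E : Type*} [TopologicalSpace X]
    [MeasurableSpace X] [OpensMeasurableSpace X] [T2Space X] [NormedAddCommGroup E]
    {μ : Measure X} [IsFiniteMeasureOnCompacts μ] {s : Set X} {f : X → E}
    (hf : ContinuousOn f s) (hs : IsCompact s) (p : ENNReal) :
    MemLp f p (μ.restrict s) := by
  have : IsFiniteMeasure (μ.restrict s) := isFiniteMeasure_restrict.2 hs.measure_lt_top.ne
  obtain ⟨C, hC⟩ := hs.exists_bound_of_continuousOn hf
  exact .of_bound (hf.aestronglyMeasurable_of_isCompact hs hs.measurableSet) C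
    (ae_restrict_of_forall_mem hs.measurableSet hC)

lemma hasDerivAt_slice_of_hasFDerivAt {E F : Type*} [NormedAddCommGroup E] [NormedSpace ℝ E]
    [NormedAddCommGroup F] [NormedSpace ℝ F] {f : E × ℝ → F} {f' : E × ℝ →L[ℝ] F} {x : E} {y : ℝ}
    (hf : HasFDerivAt f f' (x, y)) : HasDerivAt (fun t ↦ f (x, t)) (f' (0, 1)) y :=
  hf.comp_hasDerivAt y ((hasDerivAt_const y x).prodMk (hasDerivAt_id y))

theorem stmt_1_general {K : Set ℝ} (hK : IsCompact K) {a b : ℝ} (hab : a < b) {v : ℝ × ℝ → ℝ}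
    (hv : ∃ U : Set (ℝ × ℝ), IsOpen U ∧ K ×ˢ Icc a b ⊆ U ∧ ContDiffOn ℝ 1 v U) :
    ∫ x in K, v (x, a) ^ 2 ≤
      1 / (b - a) * (∫ p in K ×ˢ Icc a b, v p ^ 2) +
        2 * √(∫ p in K ×ˢ Icc a b, v p ^ 2) *
          √(∫ p in K ×ˢ Icc a b, (fderiv ℝ v p (1, 0) ^ 2 + fderiv ℝ v p (0, 1) ^ 2)) := by
  obtain ⟨U, hU, hKU, hv⟩ := hv
  have hcont : ContinuousOn v (K ×ˢ Icc a b) := hv.continuousOn.mono hKU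
  have hmemLp {f : ℝ × ℝ → ℝ} (hf : ContinuousOn f (K ×ˢ Icc a b)) :
      MemLp f 2 (volume.restrict (K ×ˢ Icc a b)) :=
    memLp_restrict_of_continuousOn_of_isCompact hf (hK.prod isCompact_Icc) 2
  have hpartial (e : ℝ × ℝ) :
      MemLp (fun p ↦ fderiv ℝ v p e) 2 (volume.restrict (K ×ˢ Icc a b)) :=
    hmemLp (((hv.continuousOn_fderiv_of_isOpen hU le_rfl).mono hKU).clm_apply continuousOn_const)
  have hslice_cont : ∀ x ∈ K, ContinuousOn (fun y ↦ v (x, y)) (Icc a b) := fun x hx ↦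
    hcont.comp (by fun_prop) fun y hy ↦ ⟨hx, hy⟩
  have hslice_deriv : ∀ x ∈ K, ∀ y ∈ Ioo a b,
      HasDerivAt (fun y ↦ v (x, y)) (fderiv ℝ v (x, y) (0, 1)) y := fun x hx y hy ↦
    hasDerivAt_slice_of_hasFDerivAt <| DifferentiableAt.hasFDerivAt <|
      (hv.contDiffAt (hU.mem_nhds (hKU ⟨hx, Ioo_subset_Icc_self hy⟩))).differentiableAt one_ne_zero
  have hvolume : volume.restrict (K ×ˢ Icc a b) =
      (volume.restrict K).prod (volume.restrict (Icc a b)) := by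
    rw [Measure.volume_eq_prod, Measure.prod_restrict]
  have htrace := integral_sq_trace_le_of_memLp_two hab
    (ae_restrict_of_forall_mem hK.measurableSet hslice_cont)
    (ae_restrict_of_forall_mem hK.measurableSet hslice_deriv)
    (hvolume ▸ hmemLp hcont) (hvolume ▸ hpartial (0, 1))
  rw [← hvolume] at htrace
  refine htrace.trans ?_
  gcongr _ + _ * √?_
  exact integral_mono (hpartial _).integrable_sq
    ((hpartial _).integrable_sq.add (hpartial _).integrable_sq)
    fun p ↦ le_add_of_nonneg_left (sq_nonneg _)

/-- Trace inequality on the bottom edge of the rectangle `R = [0,h] × [0,l]`: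
`∫₀ʰ v(x,0)² dx ≤ (1/l)‖v‖²_{L²(R)} + 2‖v‖_{L²(R)}‖∇v‖_{L²(R)}` for every `v`
continuously differentiable on a neighborhood of `R`. -/
theorem stmt_1 (h l : ℝ) (hh : 0 < h) (hl : 0 < l)
    (v : ℝ × ℝ → ℝ)
    (hv : ∃ U : Set (ℝ × ℝ), IsOpen U ∧ Set.Icc 0 h ×ˢ Set.Icc 0 l ⊆ U ∧
      ContDiffOn ℝ 1 v U) :
    (∫ x in Set.Icc 0 h, (v (x, 0)) ^ 2) ≤
      (1 / l) * (∫ p in Set.Icc 0 h ×ˢ Set.Icc 0 l, (v p) ^ 2) +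
        2 * Real.sqrt (∫ p in Set.Icc 0 h ×ˢ Set.Icc 0 l, (v p) ^ 2) *
          Real.sqrt (∫ p in Set.Icc 0 h ×ˢ Set.Icc 0 l,
            ((fderiv ℝ v p (1, 0)) ^ 2 + (fderiv ℝ v p (0, 1)) ^ 2)) := by
  simpa only [sub_zero] using stmt_1_general isCompact_Icc hl hv
end

section
/- Let T = {(x,y) ∈ ℝ² : x ≥ 0, y ≥ 0, x + y ≤ 1} be the closed unit triangle and let b(x,y) := x·y·(1 − x − y) be its interior bubble function. For every natural number k there exists a constant C = C(k) > 0 such that for every real bivariate polynomial P of total degree at most k, ∫_T P(x,y)² dA ≤ C·∫_T b(x,y)·P(x,y)² dA. -/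
open MeasureTheory

/-!
A positive definite quadratic form on a finite-dimensional space dominates every other quadratic
form, because their ratio is continuous on the compact unit sphere. This applies to
`P ↦ ∫_K w P²` on the polynomials of degree at most `k`: a nonzero polynomial cannot vanish on the
nonempty open subset of `K` where the weight `w` is positive, so the form is positive definite.
-/

section QuadraticForm

lemma continuous_quadraticForm {E : Type*} [NormedAddCommGroup E] [NormedSpace ℝ E]
    [FiniteDimensional ℝ E] (Q : QuadraticForm ℝ E) : Continuous Q := by
  obtain ⟨B, rfl⟩ := LinearMap.BilinMap.toQuadraticMap_surjective Q
  exact B.toContinuousBilinearMap.continuous.clm_apply continuous_id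

lemma exists_pos_forall_le_mul_of_posDef {E : Type*} [AddCommGroup E] [Module ℝ E]
    [FiniteDimensional ℝ E] (Q₁ : QuadraticForm ℝ E) {Q₂ : QuadraticForm ℝ E} (hQ₂ : Q₂.PosDef) :
    ∃ C : ℝ, 0 < C ∧ ∀ v, Q₁ v ≤ C * Q₂ v := by
  let e := (Module.finBasis ℝ E).equivFun
  let : NormedAddCommGroup E := .induced E _ e e.injective
  let : NormedSpace ℝ E := .induced ℝ E _ e
  have ratio_continuousOn : ContinuousOn (fun v => Q₁ v / Q₂ v) (Metric.sphere 0 1) :=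
    (continuous_quadraticForm Q₁).continuousOn.div (continuous_quadraticForm Q₂).continuousOn
      fun v hv => (hQ₂ v (ne_zero_of_mem_unit_sphere ⟨v, hv⟩)).ne'
  obtain ⟨M, hM⟩ := (isCompact_sphere (0 : E) 1).bddAbove_image ratio_continuousOn
  refine ⟨max M 1, by positivity, fun v => ?_⟩
  obtain rfl | hv := eq_or_ne v 0
  · simp
  have ratio_smul : Q₁ (‖v‖⁻¹ • v) / Q₂ (‖v‖⁻¹ • v) = Q₁ v / Q₂ v := by
    have : ‖v‖⁻¹ * ‖v‖⁻¹ ≠ 0 := by simpa using hv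
    simp only [QuadraticMap.map_smul, smul_eq_mul, mul_div_mul_left _ _ this]
  have ratio_le : Q₁ v / Q₂ v ≤ max M 1 := by
    rw [← ratio_smul]
    exact (hM ⟨_, by simp [norm_smul, hv], rfl⟩).trans (le_max_left M 1)
  exact (div_le_iff₀ (hQ₂ v hv)).1 ratio_le

end QuadraticForm

section WeightedIntegral

lemma isOpen_interior_inter_support {X Y : Type*} [TopologicalSpace X] [TopologicalSpace Y]
    [T1Space Y] [Zero Y] {K : Set X} {f : X → Y} (hf : ContinuousOn f K) :
    IsOpen (interior K ∩ Function.support f) :=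
  (hf.mono interior_subset).isOpen_inter_preimage isOpen_interior isOpen_compl_singleton

lemma setIntegral_pos_of_continuousOn_of_nonneg {X : Type*} [TopologicalSpace X]
    [MeasurableSpace X] {μ : Measure X} [μ.IsOpenPosMeasure] {K : Set X} {f : X → ℝ}
    (hK : MeasurableSet K) (hfi : IntegrableOn f K μ) (hfc : ContinuousOn f K)
    (hf : ∀ x ∈ K, 0 ≤ f x) (hne : ∃ x ∈ interior K, f x ≠ 0) : 0 < ∫ x in K, f x ∂μ := by
  rw [setIntegral_pos_iff_support_of_nonneg_ae (ae_restrict_of_forall_mem hK hf) hfi]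
  exact ((isOpen_interior_inter_support hfc).measure_pos μ hne).trans_le
    (measure_mono fun x hx => ⟨hx.2, interior_subset hx.1⟩)

variable {X : Type*} [TopologicalSpace X] [T2Space X] [MeasurableSpace X] [BorelSpace X]
  {μ : Measure X} {K : Set X} {w : X → ℝ}

lemma integrableOn_weight_mul_mul (hK : IsCompact K) (hw : IntegrableOn w K μ) (f g : C(X, ℝ)) :
    IntegrableOn (fun x => w x * (f x * g x)) K μ :=
  hw.mul_continuousOn (f * g).continuous.continuousOn hK

/-- The weighted `L²` quadratic form `f ↦ ∫_K w f²` on continuous functions. Integrability of `w`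
on the compact set `K` is what makes it a quadratic form. -/
noncomputable def weightedSqForm (hK : IsCompact K) (hw : IntegrableOn w K μ) :
    QuadraticForm ℝ C(X, ℝ) :=
  LinearMap.BilinMap.toQuadraticMap <|
    LinearMap.mk₂ ℝ (fun f g => ∫ x in K, w x * (f x * g x) ∂μ)
      (fun f₁ f₂ g => by
        rw [← integral_add (integrableOn_weight_mul_mul hK hw f₁ g)
          (integrableOn_weight_mul_mul hK hw f₂ g)]
        simp only [ContinuousMap.add_apply, add_mul, mul_add])
      (fun c f g => by
        rw [smul_eq_mul, ← integral_const_mul]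
        simp only [ContinuousMap.smul_apply, smul_eq_mul, mul_assoc, mul_left_comm])
      (fun f g₁ g₂ => by
        rw [← integral_add (integrableOn_weight_mul_mul hK hw f g₁)
          (integrableOn_weight_mul_mul hK hw f g₂)]
        simp only [ContinuousMap.add_apply, mul_add])
      (fun c f g => by
        rw [smul_eq_mul, ← integral_const_mul]
        simp only [ContinuousMap.smul_apply, smul_eq_mul, mul_left_comm])

lemma weightedSqForm_apply (hK : IsCompact K) (hw : IntegrableOn w K μ) (f : C(X, ℝ)) :
    weightedSqForm hK hw f = ∫ x in K, w x * f x ^ 2 ∂μ := by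
  simp only [weightedSqForm, LinearMap.BilinMap.toQuadraticMap_apply, LinearMap.mk₂_apply, sq]

lemma exists_setIntegral_weight_mul_sq_le [IsFiniteMeasureOnCompacts μ] [μ.IsOpenPosMeasure]
    {E : Type*} [AddCommGroup E] [Module ℝ E] [FiniteDimensional ℝ E] (φ : E →ₗ[ℝ] C(X, ℝ))
    (hK : IsCompact K) {u : X → ℝ} (hu : IntegrableOn u K μ) (hwc : ContinuousOn w K)
    (hw : ∀ x ∈ K, 0 ≤ w x) (hφ : ∀ v ≠ 0, ∃ x ∈ interior K, w x ≠ 0 ∧ φ v x ≠ 0) :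
    ∃ C : ℝ, 0 < C ∧ ∀ v,
      ∫ x in K, u x * φ v x ^ 2 ∂μ ≤ C * ∫ x in K, w x * φ v x ^ 2 ∂μ := by
  have hwi : IntegrableOn w K μ := hwc.integrableOn_compact hK
  have posDef : ((weightedSqForm hK hwi).comp φ).PosDef := by
    intro v hv
    obtain ⟨x, hx, hwx, hvx⟩ := hφ v hv
    have hc : ContinuousOn (fun x => w x * φ v x ^ 2) K :=
      hwc.mul ((φ v).continuous.pow 2).continuousOn
    rw [QuadraticMap.comp_apply, weightedSqForm_apply]
    exact setIntegral_pos_of_continuousOn_of_nonneg hK.measurableSet (hc.integrableOn_compact hK)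
      hc (fun x hx => mul_nonneg (hw x hx) (sq_nonneg _))
      ⟨x, hx, mul_ne_zero hwx (pow_ne_zero 2 hvx)⟩
  simpa only [QuadraticMap.comp_apply, weightedSqForm_apply] using
    exists_pos_forall_le_mul_of_posDef ((weightedSqForm hK hu).comp φ) posDef

end WeightedIntegral

section Polynomial

lemma exists_mem_eval_ne_zero_of_isOpen {σ R : Type*} [CommRing R] [IsDomain R]
    [TopologicalSpace R] [T1Space R] [PerfectSpace R] {U : Set (σ → R)} (hU : IsOpen U)
    (hne : U.Nonempty) {P : MvPolynomial σ R} (hP : P ≠ 0) :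
    ∃ x ∈ U, MvPolynomial.eval x P ≠ 0 := by
  obtain ⟨a, ha⟩ := hne
  obtain ⟨I, -, t, ht, htU⟩ := Filter.mem_pi.1 (nhds_pi (a := a) ▸ hU.mem_nhds ha)
  by_contra! h
  refine hP (MvPolynomial.funext_set t (fun i => infinite_of_mem_nhds (a i) (ht i)) fun x hx => ?_)
  rw [h x (htU fun i _ => hx i trivial), map_zero]

/-- A multivariate polynomial as a continuous function on the affine space, linearly in the
polynomial. -/
noncomputable def evalContinuousMap (σ : Type*) : MvPolynomial σ ℝ →ₗ[ℝ] C(σ → ℝ, ℝ) where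
  toFun P := ⟨fun x => MvPolynomial.eval x P, MvPolynomial.continuous_eval P⟩
  map_add' P Q := by ext x; exact map_add (MvPolynomial.eval x) P Q
  map_smul' c P := by ext x; exact MvPolynomial.smul_eval x P c

lemma evalContinuousMap_apply {σ : Type*} (P : MvPolynomial σ ℝ) (x : σ → ℝ) :
    evalContinuousMap σ P x = MvPolynomial.eval x P := rfl

end Polynomial

section Simplex

variable {σ : Type*} [Fintype σ]

/-- The simplex in `ℝ^σ` with vertices the origin and the unit coordinate vectors; for
`σ = Fin 2` it is the unit triangle. -/
def cornerSimplex (σ : Type*) [Fintype σ] : Set (σ → ℝ) :=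
  {x | (∀ i, 0 ≤ x i) ∧ ∑ i, x i ≤ 1}

/-- The interior bubble function of `cornerSimplex σ`: the product of the barycentric
coordinates. -/
def simplexBubble (x : σ → ℝ) : ℝ := (∏ i, x i) * (1 - ∑ i, x i)

lemma isCompact_cornerSimplex : IsCompact (cornerSimplex σ) := by
  refine (isCompact_Icc (a := (0 : σ → ℝ)) (b := 1)).of_isClosed_subset ?_ ?_
  · exact (isClosed_le continuous_const continuous_id).inter
      (isClosed_le (f := fun x : σ → ℝ => ∑ i, x i) (by fun_prop) continuous_const)
  · rintro x ⟨hx, hsum⟩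
    exact ⟨hx, fun i => (Finset.single_le_sum (fun j _ => hx j) (Finset.mem_univ i)).trans hsum⟩

lemma continuous_simplexBubble : Continuous (simplexBubble (σ := σ)) := by
  unfold simplexBubble; fun_prop

lemma simplexBubble_nonneg {x : σ → ℝ} (hx : x ∈ cornerSimplex σ) : 0 ≤ simplexBubble x :=
  mul_nonneg (Finset.prod_nonneg fun i _ => hx.1 i) (sub_nonneg.2 hx.2)

lemma exists_mem_interior_cornerSimplex_simplexBubble_ne_zero :
    ∃ x ∈ interior (cornerSimplex σ), simplexBubble x ≠ 0 := by
  let U : Set (σ → ℝ) := {x | (∀ i, 0 < x i) ∧ ∑ i, x i < 1}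
  have isOpen_U : IsOpen U := by
    simp only [U, Set.ofPred_and, Set.ofPred_forall]
    exact (isOpen_iInter_of_finite fun i => isOpen_lt continuous_const (continuous_apply i)).inter
      (isOpen_lt (by fun_prop) continuous_const)
  have U_subset : U ⊆ cornerSimplex σ := fun x hx => ⟨fun i => (hx.1 i).le, hx.2.le⟩
  let x : σ → ℝ := fun _ => 1 / (Fintype.card σ + 1)
  have hx : x ∈ U := by
    refine ⟨fun _ => by positivity, ?_⟩
    simp only [x, Finset.sum_const, Finset.card_univ, nsmul_eq_mul, mul_one_div]
    exact (div_lt_one (by positivity)).2 (lt_add_one _)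
  exact ⟨x, interior_maximal U_subset isOpen_U hx,
    mul_ne_zero (Finset.prod_ne_zero_iff.2 fun i _ => (hx.1 i).ne') (sub_pos.2 hx.2).ne'⟩

end Simplex

lemma setIntegral_finTwo {F : Type*} [NormedAddCommGroup F] [NormedSpace ℝ F]
    (s : Set (Fin 2 → ℝ)) (f : (Fin 2 → ℝ) → F) :
    ∫ q in {p : ℝ × ℝ | ![p.1, p.2] ∈ s}, f ![q.1, q.2] = ∫ x in s, f x :=
  (volume_preserving_finTwoArrow ℝ).symm.setIntegral_preimage_emb
    (MeasurableEquiv.measurableEmbedding _) f s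

theorem stmt_5_general {σ : Type*} [Finite σ] (μ : Measure (σ → ℝ))
    [IsFiniteMeasureOnCompacts μ] [μ.IsOpenPosMeasure] {K : Set (σ → ℝ)} {w : (σ → ℝ) → ℝ}
    (hK : IsCompact K) (hwc : ContinuousOn w K) (hw : ∀ x ∈ K, 0 ≤ w x)
    (hne : ∃ x ∈ interior K, w x ≠ 0) (k : ℕ) :
    ∃ C : ℝ, 0 < C ∧ ∀ P : MvPolynomial σ ℝ, P.totalDegree ≤ k →
      ∫ x in K, MvPolynomial.eval x P ^ 2 ∂μ ≤
        C * ∫ x in K, w x * MvPolynomial.eval x P ^ 2 ∂μ := by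
  let V := MvPolynomial.restrictTotalDegree σ ℝ k
  have hV : ∀ P : V, P ≠ 0 → ∃ x ∈ interior K, w x ≠ 0 ∧ evalContinuousMap σ P x ≠ 0 := by
    intro P hP
    obtain ⟨x, ⟨hxK, hwx⟩, hPx⟩ := exists_mem_eval_ne_zero_of_isOpen
      (isOpen_interior_inter_support hwc) hne (Subtype.coe_ne_coe.2 hP)
    exact ⟨x, hxK, hwx, hPx⟩
  obtain ⟨C, hC, h⟩ := exists_setIntegral_weight_mul_sq_le (evalContinuousMap σ ∘ₗ V.subtype) hK
    (continuousOn_const (c := (1 : ℝ)).integrableOn_compact (μ := μ) hK) hwc hw hV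
  refine ⟨C, hC, fun P hP => ?_⟩
  simpa only [one_mul, LinearMap.comp_apply, Submodule.subtype_apply, evalContinuousMap_apply]
    using h ⟨P, (MvPolynomial.mem_restrictTotalDegree σ k P).2 hP⟩

/-- Interior-bubble norm equivalence on the unit triangle
`T = {(x,y) : x ≥ 0, y ≥ 0, x + y ≤ 1}` with bubble `b(x,y) = xy(1−x−y)`:
for every degree bound `k` there is `C = C(k) > 0` with
`∫_T P² ≤ C ∫_T b P²` for all real bivariate polynomials `P` of total degree ≤ `k`. -/
theorem stmt_5 (k : ℕ) :
    ∃ C : ℝ, 0 < C ∧ ∀ P : MvPolynomial (Fin 2) ℝ, P.totalDegree ≤ k →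
      (∫ q in {p : ℝ × ℝ | 0 ≤ p.1 ∧ 0 ≤ p.2 ∧ p.1 + p.2 ≤ 1},
          (MvPolynomial.eval ![q.1, q.2] P) ^ 2) ≤
        C * ∫ q in {p : ℝ × ℝ | 0 ≤ p.1 ∧ 0 ≤ p.2 ∧ p.1 + p.2 ≤ 1},
          q.1 * q.2 * (1 - q.1 - q.2) * (MvPolynomial.eval ![q.1, q.2] P) ^ 2 := by
  simpa [← setIntegral_finTwo, cornerSimplex, simplexBubble, and_assoc, sub_sub] using
    stmt_5_general (σ := Fin 2) volume isCompact_cornerSimplex continuous_simplexBubble.continuousOn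
      (fun _ => simplexBubble_nonneg) exists_mem_interior_cornerSimplex_simplexBubble_ne_zero k
end
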